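/- arXiv:2207.09317 — 4 statements merged into one kernel-verified Lean document; each statement's English description precedes it below -/
import Mathlib

section
/- A real Banach space B with dual B* is reflexive if and only if for every nonempty, closed, and convex subset C of B and for every φ ∈ B*, the set π_C(φ) is nonempty. -/
/-!
If `B` is reflexive, bounded closed convex sets are weakly compact. The sublevel sets in `C` of
the continuous convex functional `V(φ, ·)` are bounded because `V(φ, x) ≥ (‖x‖ - ‖φ‖)²`, so they
have a common point, and that point is a minimizer.

If `B` is not reflexive, follow James. A functional `F` on the dual at positive distance from `B`
yields, by finite-dimensional separation, unit-ball sequences `f n` in the dual and `x n` in `B`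
with `f m (x n) = 0` for `n < m` and `f m (x n) ≥ δ` for `m ≤ n`. On the closed span `Z` of the
`x n`, the `f n` tend pointwise to `0`, while their convex combinations have norm at least `δ`.
Choose `c n` successively among the convex combinations of `f n, f (n + 1), …` so as to nearly
minimize the norm of `∑ i < n, 2⁻⁽ⁱ⁺¹⁾ c i + 2⁻ⁿ c n`. The norm of the sum `h` of the series
`∑ 2⁻⁽ⁱ⁺¹⁾ c i` then exceeds that of its `n`-th partial sum by more than `2⁻ⁿ δ / 2`, whereas at a
given `z` in the unit ball of `Z` the remaining terms contribute at most that much once `n` is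
large. So `h` does not attain its norm, the hyperplane `C = {h = 1}` of `Z` has no point of least
norm, and `π_C(0) = ∅`.
-/

open Set Filter

noncomputable section

/-- The normalized duality map `J x = {φ : ⟨φ,x⟩ = ‖x‖² and ‖φ‖ = ‖x‖}`. -/
def dualityMap {B : Type*} [NormedAddCommGroup B] [NormedSpace ℝ B] (x : B) :
    Set (B →L[ℝ] ℝ) :=
  {φ | φ x = ‖x‖ ^ 2 ∧ ‖φ‖ = ‖x‖}

/-- The Lyapunov functional `V(φ,x) = ‖φ‖² - 2⟨φ,x⟩ + ‖x‖²`. -/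
def lyapV {B : Type*} [NormedAddCommGroup B] [NormedSpace ℝ B] (φ : B →L[ℝ] ℝ) (x : B) : ℝ :=
  ‖φ‖ ^ 2 - 2 * φ x + ‖x‖ ^ 2

/-- The generalized projection: the set of minimizers of `V(φ, ·)` over `C`. -/
def genProj {B : Type*} [NormedAddCommGroup B] [NormedSpace ℝ B] (C : Set B)
    (φ : B →L[ℝ] ℝ) : Set B :=
  {u | u ∈ C ∧ ∀ y ∈ C, lyapV φ u ≤ lyapV φ y}

/-- The generalized metric projection `Π_C x = ⋃_{jx ∈ J x} π_C (jx)`. -/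
def genMetricProj {B : Type*} [NormedAddCommGroup B] [NormedSpace ℝ B] (C : Set B) (x : B) :
    Set B :=
  ⋃ φ ∈ dualityMap x, genProj C φ

/-- The metric projection: the set of nearest points to `x` in `C`. -/
def metricProj {B : Type*} [NormedAddCommGroup B] [NormedSpace ℝ B] (C : Set B) (x : B) :
    Set B :=
  {u | u ∈ C ∧ ∀ y ∈ C, ‖x - u‖ ≤ ‖x - y‖}

/-- The set of generalized identical points of `x`. -/
def genIdentical {B : Type*} [NormedAddCommGroup B] [NormedSpace ℝ B] (x : B) : Set B :=
  {y | (dualityMap x ∩ dualityMap y).Nonempty}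

section Reflexivity

open Topology NNReal Pointwise Metric NormedSpace Bornology

variable {E : Type*} [NormedAddCommGroup E] [NormedSpace ℝ E]

theorem isCompact_image_toWeakSpace (hE : Function.Surjective (inclusionInDoubleDual ℝ E))
    {s : Set E} (hconv : Convex ℝ s) (hclosed : IsClosed s) (hbdd : IsBounded s) :
    IsCompact (toWeakSpace ℝ E '' s) := by
  have hrange : closure (inclusionInDoubleDualWeak ℝ E '' (toWeakSpace ℝ E '' s)) ⊆
      range (inclusionInDoubleDualWeak ℝ E) := by
    rw [Function.Surjective.range_eq (f := inclusionInDoubleDualWeak ℝ E) hE]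
    exact subset_univ _
  have hcompact := isCompact_closure_of_isBounded ℝ E (toWeakSpace ℝ E '' s)
    (by rwa [preimage_image_eq _ (toWeakSpace ℝ E).injective]) hrange
  rwa [← hconv.toWeakSpace_closure ℝ, hclosed.closure_eq] at hcompact

theorem nonempty_iInter_of_directed_isClosed_convex
    (hE : Function.Surjective (inclusionInDoubleDual ℝ E)) {ι : Type*} [Nonempty ι]
    {K : ι → Set E} (hdir : Directed (· ⊇ ·) K) (hne : ∀ i, (K i).Nonempty)
    (hclosed : ∀ i, IsClosed (K i)) (hconv : ∀ i, Convex ℝ (K i))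
    (hbdd : ∀ i, IsBounded (K i)) : (⋂ i, K i).Nonempty := by
  have hcompact i := isCompact_image_toWeakSpace hE (hconv i) (hclosed i) (hbdd i)
  have hweakClosed (i) : IsClosed (toWeakSpace ℝ E '' K i) := by
    rw [← (hclosed i).closure_eq, (hconv i).toWeakSpace_closure ℝ]
    exact isClosed_closure
  have hinter := IsCompact.nonempty_iInter_of_directed_nonempty_isCompact_isClosed
    (fun i => toWeakSpace ℝ E '' K i) (fun i j =>
      (hdir i j).imp fun _ hk => ⟨image_mono hk.1, image_mono hk.2⟩)
    (fun i => (hne i).image _) hcompact hweakClosed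
  rwa [← image_iInter (toWeakSpace ℝ E).bijective, image_nonempty] at hinter

theorem exists_isMinOn_of_convexOn (hE : Function.Surjective (inclusionInDoubleDual ℝ E))
    {s : Set E} (hne : s.Nonempty) (hclosed : IsClosed s) {f : E → ℝ} (hconv : ConvexOn ℝ s f)
    (hf : LowerSemicontinuousOn f s) (hbdd : ∀ c, IsBounded {x ∈ s | f x ≤ c}) :
    ∃ x ∈ s, IsMinOn f s x := by
  have : Nonempty s := hne.to_subtype
  have hlevelClosed (c : ℝ) : IsClosed {x ∈ s | f x ≤ c} := by
    obtain ⟨v, hv, hsv⟩ := lowerSemicontinuousOn_iff_preimage_Iic.1 hf c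
    have h : IsClosed (s ∩ f ⁻¹' Iic c) := by
      rw [hsv]
      exact hclosed.inter hv
    exact h
  have hdir : Directed (· ⊇ ·) fun x : s => {y ∈ s | f y ≤ f x} := fun x y => by
    obtain h | h := le_total (f x) (f y)
    · exact ⟨x, Subset.rfl, fun z hz => ⟨hz.1, hz.2.trans h⟩⟩
    · exact ⟨y, fun z hz => ⟨hz.1, hz.2.trans h⟩, Subset.rfl⟩
  obtain ⟨u, hu⟩ := nonempty_iInter_of_directed_isClosed_convex hE hdir
    (fun x => ⟨x, x.2, le_rfl⟩) (fun x => hlevelClosed (f x)) (fun x => hconv.convex_le (f x))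
    (fun x => hbdd (f x))
  rw [mem_iInter] at hu
  exact ⟨u, (hu (Classical.arbitrary s)).1, fun x hx => (hu ⟨x, hx⟩).2⟩

theorem convexOn_lyapV (φ : StrongDual ℝ E) : ConvexOn ℝ univ (lyapV φ) := by
  have hsq : ConvexOn ℝ univ fun x : E => ‖x‖ ^ 2 :=
    (convexOn_norm convex_univ).pow (fun x _ => norm_nonneg x) 2
  have haffine : ConvexOn ℝ univ fun x : E => ‖φ‖ ^ 2 - 2 * φ x :=
    (convexOn_const _ convex_univ).sub (((2 : ℝ) • φ).toLinearMap.concaveOn convex_univ)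
  exact haffine.add hsq

theorem continuous_lyapV (φ : StrongDual ℝ E) : Continuous (lyapV φ) := by
  unfold lyapV
  fun_prop

theorem sq_norm_sub_norm_le_lyapV (φ : StrongDual ℝ E) (x : E) :
    (‖x‖ - ‖φ‖) ^ 2 ≤ lyapV φ x := by
  have h : φ x ≤ ‖φ‖ * ‖x‖ := (le_abs_self _).trans (φ.le_opNorm x)
  unfold lyapV
  linarith

theorem isBounded_setOf_lyapV_le (φ : StrongDual ℝ E) (c : ℝ) :
    IsBounded {x | lyapV φ x ≤ c} := by
  refine isBounded_iff_forall_norm_le.2 ⟨‖φ‖ + √c, fun x hx => ?_⟩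
  have h := Real.abs_le_sqrt ((sq_norm_sub_norm_le_lyapV φ x).trans hx)
  linarith [le_abs_self (‖x‖ - ‖φ‖)]

theorem genProj_nonempty_of_surjective_inclusionInDoubleDual
    (hE : Function.Surjective (inclusionInDoubleDual ℝ E)) {C : Set E} (hne : C.Nonempty)
    (hclosed : IsClosed C) (hconv : Convex ℝ C) (φ : StrongDual ℝ E) : (genProj C φ).Nonempty :=
  exists_isMinOn_of_convexOn hE hne hclosed
    ((convexOn_lyapV φ).subset (subset_univ C) hconv)
    ((continuous_lyapV φ).lowerSemicontinuous.lowerSemicontinuousOn C)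
    fun c => (isBounded_setOf_lyapV_le φ c).subset fun _ hx => hx.2

theorem bidual_apply_comp_pi {ι : Type*} [Finite ι] (F : StrongDual ℝ (StrongDual ℝ E))
    (a : StrongDual ℝ (ι → ℝ)) (f : ι → StrongDual ℝ E) :
    F (a.comp (ContinuousLinearMap.pi f)) = a fun i => F (f i) := by
  classical
  have := Fintype.ofFinite ι
  let c (i : ι) : ℝ := a fun j => if i = j then 1 else 0
  have hpi (y : ι → ℝ) : a y = ∑ i, y i • c i := a.toLinearMap.pi_apply_eq_sum_univ y
  have hcomp : a.comp (ContinuousLinearMap.pi f) = ∑ i, c i • f i := by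
    ext x
    simp [hpi fun i => f i x, mul_comm]
  simp [hcomp, hpi fun i => F (f i), mul_comm]

theorem bidual_apply_mem_closure_image_closedBall {ι : Type*} [Finite ι] (f : ι → StrongDual ℝ E)
    {F : StrongDual ℝ (StrongDual ℝ E)} {R : ℝ} (hF : ‖F‖ ≤ R) :
    (fun i => F (f i)) ∈ closure (ContinuousLinearMap.pi f '' closedBall 0 R) := by
  have hR : 0 ≤ R := (norm_nonneg F).trans hF
  by_contra hc
  obtain ⟨a, u, hs, hu⟩ := geometric_hahn_banach_closed_point
    ((convex_closedBall (0 : E) R).linear_image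
      (ContinuousLinearMap.pi f).toLinearMap).closure isClosed_closure hc
  let ψ := a.comp (ContinuousLinearMap.pi f)
  have hball (x : E) (hx : ‖x‖ ≤ R) : ψ x < u :=
    hs _ (subset_closure ⟨x, mem_closedBall_zero_iff.2 hx, rfl⟩)
  have hu0 : 0 ≤ u := by simpa using (hball 0 (by simpa using hR)).le
  have hψ : ‖R • ψ‖ ≤ u := by
    refine ContinuousLinearMap.opNorm_le_of_unit_norm hu0 fun x hx => abs_le'.2 ⟨?_, ?_⟩
    · simpa using (hball (R • x) (by simp [norm_smul, hx, abs_of_nonneg hR])).le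
    · simpa using (hball (-(R • x)) (by simp [norm_smul, hx, abs_of_nonneg hR])).le
  rw [norm_smul, Real.norm_of_nonneg hR] at hψ
  rw [← bidual_apply_comp_pi] at hu
  exact hu.not_ge ((le_abs_self _).trans ((F.le_of_opNorm_le hF ψ).trans hψ))

theorem exists_norm_le_forall_abs_apply_sub_lt {ι : Type*} [Finite ι] (f : ι → StrongDual ℝ E)
    {F : StrongDual ℝ (StrongDual ℝ E)} {R : ℝ} (hF : ‖F‖ ≤ R) {ε : ℝ} (hε : 0 < ε) :
    ∃ x : E, ‖x‖ ≤ R ∧ ∀ i, |f i x - F (f i)| < ε := by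
  have := Fintype.ofFinite ι
  obtain ⟨_, ⟨x, hx, rfl⟩, hdist⟩ :=
    mem_closure_iff.1 (bidual_apply_mem_closure_image_closedBall f hF) ε hε
  rw [dist_comm] at hdist
  exact ⟨x, mem_closedBall_zero_iff.1 hx, fun i => (dist_le_pi_dist _ _ i).trans_lt hdist⟩

theorem mem_range_inclusionInDoubleDual_of_finite {ι : Type*} [Finite ι] (x : ι → E)
    {F : StrongDual ℝ (StrongDual ℝ E)} (hF : ∀ f, (∀ i, f (x i) = 0) → F f = 0) :
    F ∈ range (inclusionInDoubleDual ℝ E) := by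
  have hspan : F.toLinearMap ∈ Submodule.span ℝ
      (range fun i => (inclusionInDoubleDual ℝ E (x i)).toLinearMap) :=
    mem_span_of_iInf_ker_le_ker fun f hf => hF f (by simpa [Submodule.mem_iInf] using hf)
  have hle : Submodule.span ℝ (range fun i => (inclusionInDoubleDual ℝ E (x i)).toLinearMap) ≤
      ((ContinuousLinearMap.coeLM ℝ).comp (inclusionInDoubleDual ℝ E).toLinearMap).range := by
    rw [Submodule.span_le]
    rintro _ ⟨i, rfl⟩
    exact ⟨x i, rfl⟩
  obtain ⟨z, hz⟩ := hle hspan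
  exact ⟨z, ContinuousLinearMap.coe_injective hz⟩

set_option maxSynthPendingDepth 3 in
theorem exists_dual_forall_apply_eq_zero_of_lt_infDist {ι : Type*} [Finite ι] (x : ι → E)
    {F : StrongDual ℝ (StrongDual ℝ E)} {θ : ℝ} (hθ : 0 ≤ θ)
    (hF : θ < infDist F (range (inclusionInDoubleDual ℝ E))) :
    ∃ f : StrongDual ℝ E, ‖f‖ ≤ 1 ∧ F f = θ ∧ ∀ i, f (x i) = 0 := by
  let N : Submodule ℝ (StrongDual ℝ E) := ⨅ i, (inclusionInDoubleDual ℝ E (x i)).toLinearMap.ker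
  have hN (f) : f ∈ N ↔ ∀ i, f (x i) = 0 := by simp [N, Submodule.mem_iInf]
  obtain ⟨G, hGN, hGnorm⟩ := exists_extension_norm_eq N (F.comp N.subtypeL)
  have hmem : F - G ∈ range (inclusionInDoubleDual ℝ E) :=
    mem_range_inclusionInDoubleDual_of_finite x fun f hf => by
      simpa [sub_eq_zero] using (hGN ⟨f, (hN f).2 hf⟩).symm
  have hθG : θ < ‖F.comp N.subtypeL‖ := by
    simpa [dist_eq_norm, hGnorm] using hF.trans_le (infDist_le_dist_of_mem hmem)
  obtain ⟨f, hf⟩ : ∃ f : N, θ * ‖f‖ < |F f| := by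
    by_contra! h
    exact hθG.not_ge (ContinuousLinearMap.opNorm_le_bound _ hθ h)
  have hpos : 0 < |F f| := (by positivity : 0 ≤ θ * ‖f‖).trans_lt hf
  refine ⟨(θ / F f) • (f : StrongDual ℝ E), ?_, ?_, fun i => ?_⟩
  · rw [norm_smul, Real.norm_eq_abs, abs_div, abs_of_nonneg hθ, div_mul_eq_mul_div,
      div_le_one hpos]
    exact hf.le
  · rw [map_smul, smul_eq_mul, div_mul_cancel₀ _ (abs_pos.1 hpos)]
  · simp [(hN f).1 f.2 i]

/-- The systems of functionals `f n` and vectors `x n` that James extracts from a nonreflexive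
space: all of them lie in the unit balls, and the matrix with entries `f m (x n)` is zero strictly
below its diagonal and at least `δ` on and above it. -/
structure IsJamesSystem (δ : ℝ) (f : ℕ → StrongDual ℝ E) (x : ℕ → E) : Prop where
  norm_dual_le_one : ∀ n, ‖f n‖ ≤ 1
  norm_le_one : ∀ n, ‖x n‖ ≤ 1
  apply_eq_zero : ∀ {m n}, n < m → f m (x n) = 0
  le_apply : ∀ {m n}, m ≤ n → δ ≤ f m (x n)

theorem exists_isJamesSystem_of_lt_infDist {F : StrongDual ℝ (StrongDual ℝ E)} (hF : ‖F‖ ≤ 1)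
    {δ θ : ℝ} (hθ : 0 ≤ θ) (hδ : δ < θ)
    (hdist : θ < infDist F (range (inclusionInDoubleDual ℝ E))) :
    ∃ (f : ℕ → StrongDual ℝ E) (x : ℕ → E), IsJamesSystem δ f x := by
  obtain ⟨p, hp, hrel⟩ := exists_seq_of_forall_finset_exists
    (fun p : StrongDual ℝ E × E => ‖p.1‖ ≤ 1 ∧ F p.1 = θ ∧ ‖p.2‖ ≤ 1 ∧ δ ≤ p.1 p.2)
    (fun p q => q.1 p.2 = 0 ∧ δ ≤ p.1 q.2) fun s hs => by
      obtain ⟨f, hf1, hfF, hf0⟩ :=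
        exists_dual_forall_apply_eq_zero_of_lt_infDist (fun q : s => q.1.2) hθ hdist
      obtain ⟨y, hy1, hyF⟩ := exists_norm_le_forall_abs_apply_sub_lt
        (fun o : Option s => o.elim f fun q => q.1.1) hF (sub_pos.2 hδ)
      have hle {g : StrongDual ℝ E} (hg : F g = θ) (h : |g y - F g| < θ - δ) : δ ≤ g y := by
        rw [hg] at h
        linarith [(abs_lt.1 h).1]
      exact ⟨(f, y), ⟨hf1, hfF, hy1, hle hfF (hyF none)⟩,
        fun q hq => ⟨hf0 ⟨q, hq⟩, hle (hs q hq).2.1 (hyF (some ⟨q, hq⟩))⟩⟩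
  refine ⟨fun n => (p n).1, fun n => (p n).2, fun n => (hp n).1, fun n => (hp n).2.2.1,
    fun h => (hrel _ _ h).1, fun h => ?_⟩
  obtain rfl | h := h.eq_or_lt
  · exact (hp _).2.2.2
  · exact (hrel _ _ h).2

set_option maxSynthPendingDepth 3 in
theorem exists_isJamesSystem_of_not_surjective [CompleteSpace E]
    (hE : ¬Function.Surjective (inclusionInDoubleDual ℝ E)) :
    ∃ δ > 0, ∃ (f : ℕ → StrongDual ℝ E) (x : ℕ → E), IsJamesSystem δ f x := by
  let J := (inclusionInDoubleDual ℝ E).toLinearMap.range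
  have hclosed : IsClosed (range (inclusionInDoubleDual ℝ E)) :=
    (inclusionInDoubleDualLi ℝ (E := E)).isometry.isClosedEmbedding.isClosed_range
  obtain ⟨F, hF⟩ := not_forall.1 hE
  have hF0 : ‖F‖ ≠ 0 := fun h => hF ⟨0, by rw [map_zero, norm_eq_zero.1 h]⟩
  have hmem : ‖F‖⁻¹ • F ∉ range (inclusionInDoubleDual ℝ E) := fun h =>
    hF ((J.smul_mem_iff (inv_ne_zero hF0)).1 h)
  have hpos := (hclosed.notMem_iff_infDist_pos (range_nonempty _)).1 hmem
  obtain ⟨θ, hθ, hθF⟩ := exists_between hpos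
  exact ⟨θ / 2, half_pos hθ, exists_isJamesSystem_of_lt_infDist
    (by rw [norm_smul, norm_inv, norm_norm, inv_mul_cancel₀ hF0]) hθ.le (half_lt_self hθ) hθF⟩

theorem tendsto_apply_zero_of_mem_topologicalClosure_span {ι F : Type*} [NormedAddCommGroup F]
    [NormedSpace ℝ F] {l : Filter ι} {f : ι → E →L[ℝ] F} {C : ℝ≥0} (hf : ∀ i, ‖f i‖ ≤ C)
    {s : Set E} (hs : ∀ x ∈ s, Tendsto (f · x) l (𝓝 0)) {z : E}
    (hz : z ∈ (Submodule.span ℝ s).topologicalClosure) : Tendsto (f · z) l (𝓝 0) := by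
  have hequi : UniformEquicontinuous fun i => (f i : E → F) :=
    LipschitzWith.uniformEquicontinuous _ C fun i => (f i).lipschitz.weaken (hf i)
  refine (hequi.equicontinuous z).tendsto_of_mem_closure
    (f := fun _ => 0) tendsto_const_nhds (fun y hy => ?_) hz
  induction hy using Submodule.span_induction with
  | mem y hy => exact hs y hy
  | zero => simpa using tendsto_const_nhds
  | add y w _ _ hy hw => simpa using hy.add hw
  | smul a y _ hy => simpa using hy.const_smul a

namespace IsJamesSystem

variable {δ : ℝ} {f : ℕ → StrongDual ℝ E} {x : ℕ → E}

theorem restrict (hfx : IsJamesSystem δ f x) {Z : Submodule ℝ E} (hxZ : ∀ n, x n ∈ Z) :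
    IsJamesSystem δ (fun n => (f n).comp Z.subtypeL) fun n => (⟨x n, hxZ n⟩ : Z) where
  norm_dual_le_one n := ContinuousLinearMap.opNorm_le_bound _ zero_le_one fun z =>
    (f n).le_of_opNorm_le (hfx.norm_dual_le_one n) z
  norm_le_one := hfx.norm_le_one
  apply_eq_zero := hfx.apply_eq_zero
  le_apply := hfx.le_apply

theorem tendsto_apply_zero (hfx : IsJamesSystem δ f x) {z : E}
    (hz : z ∈ (Submodule.span ℝ (range x)).topologicalClosure) :
    Tendsto (f · z) atTop (𝓝 0) := by
  refine tendsto_apply_zero_of_mem_topologicalClosure_span (C := 1) hfx.norm_dual_le_one ?_ hz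
  rintro _ ⟨n, rfl⟩
  exact tendsto_const_nhds.congr'
    ((eventually_gt_atTop n).mono fun m hm => (hfx.apply_eq_zero hm).symm)

theorem le_norm_of_mem_convexHull (hfx : IsJamesSystem δ f x) {g : StrongDual ℝ E}
    (hg : g ∈ convexHull ℝ (range f)) : δ ≤ ‖g‖ := by
  have hsub : convexHull ℝ (range f) ⊆ {g | ∀ᶠ n in atTop, δ ≤ g (x n)} := by
    refine convexHull_min ?_ fun g hg k hk a b ha hb hab => ?_
    · rintro _ ⟨m, rfl⟩
      exact (eventually_ge_atTop m).mono fun n => hfx.le_apply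
    · filter_upwards [hg, hk] with n hgn hkn
      exact convex_Ici δ hgn hkn ha hb hab
  obtain ⟨n, hn⟩ := (hsub hg).exists
  exact hn.trans ((le_abs_self _).trans (g.unit_le_opNorm _ (hfx.norm_le_one n)))

end IsJamesSystem

/-- The partial sums of the series `∑ 2⁻⁽ⁱ⁺¹⁾ cᵢ` that James' norm-minimization argument builds. -/
def dyadicSum (c : ℕ → E) (n : ℕ) : E :=
  ∑ i ∈ Finset.range n, (1 / 2 : ℝ) ^ (i + 1) • c i

/-- The possible values, up to closure, of `∑ 2⁻⁽ⁱ⁺¹⁾ cᵢ` when `c 0, …, c (n - 1)` are given and the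
remaining terms lie in the convex set `K`: a translate of `2⁻ⁿ K`, as the remaining weights add up
to `2⁻ⁿ`. -/
def dyadicSlice (K : Set E) (c : ℕ → E) (n : ℕ) : Set E :=
  dyadicSum c n +ᵥ (1 / 2 : ℝ) ^ n • K

theorem dyadicSum_succ (c : ℕ → E) (n : ℕ) :
    dyadicSum c (n + 1) = dyadicSum c n + (1 / 2 : ℝ) ^ (n + 1) • c n :=
  Finset.sum_range_succ _ n

theorem mem_dyadicSlice {K : Set E} {c : ℕ → E} {n : ℕ} {g : E} :
    g ∈ dyadicSlice K c n ↔ ∃ k ∈ K, dyadicSum c n + (1 / 2 : ℝ) ^ n • k = g := by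
  simp [dyadicSlice, mem_vadd_set, mem_smul_set]

theorem dyadicSlice_zero (K : Set E) (c : ℕ → E) : dyadicSlice K c 0 = K := by
  simp [dyadicSlice, dyadicSum]

theorem dyadicSlice_succ_subset {K L : Set E} (hK : Convex ℝ K) (hLK : L ⊆ K) {c : ℕ → E} {n : ℕ}
    (hc : c n ∈ K) : dyadicSlice L c (n + 1) ⊆ dyadicSlice K c n := by
  intro g hg
  obtain ⟨k, hk, rfl⟩ := mem_dyadicSlice.1 hg
  refine mem_dyadicSlice.2 ⟨(1 / 2 : ℝ) • c n + (1 / 2 : ℝ) • k,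
    hK hc (hLK hk) (by norm_num) (by norm_num) (by norm_num), ?_⟩
  rw [dyadicSum_succ, pow_succ]
  module

theorem diam_dyadicSlice (K : Set E) (c : ℕ → E) (n : ℕ) :
    diam (dyadicSlice K c n) = (1 / 2) ^ n * diam K := by
  rw [dyadicSlice, diam_vadd, diam_smul₀, Real.norm_of_nonneg (by positivity)]

theorem nonempty_iInter_closure_dyadicSlice [CompleteSpace E] {K : ℕ → Set E} (hanti : Antitone K)
    (hconv : ∀ n, Convex ℝ (K n)) (hbdd : IsBounded (K 0)) {c : ℕ → E} (hc : ∀ n, c n ∈ K n) :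
    (⋂ n, closure (dyadicSlice (K n) c n)).Nonempty := by
  have hslice : Antitone fun n => dyadicSlice (K n) c n :=
    antitone_nat_of_succ_le fun n =>
      dyadicSlice_succ_subset (hconv n) (hanti n.le_succ) (hc n)
  have hbounded (n : ℕ) : IsBounded (dyadicSlice (K n) c n) :=
    ((hbdd.subset (hanti n.zero_le)).smul₀ _).vadd _
  refine nonempty_iInter_of_nonempty_biInter (fun _ => isClosed_closure)
    (fun n => (hbounded n).closure) (fun N => ?_) ?_
  · exact ⟨_, mem_iInter₂.2 fun n hn => subset_closure
      (hslice hn (mem_dyadicSlice.2 ⟨c N, hc N, rfl⟩))⟩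
  · have hlim : Tendsto (fun n => (1 / 2 : ℝ) ^ n * diam (K 0)) atTop (𝓝 0) := by
      simpa using (tendsto_pow_atTop_nhds_zero_of_lt_one (r := (1 / 2 : ℝ))
        (by norm_num) (by norm_num)).mul_const (diam (K 0))
    refine squeeze_zero (fun _ => diam_nonneg) (fun n => ?_) hlim
    rw [diam_closure, diam_dyadicSlice]
    gcongr
    exact diam_mono (hanti n.zero_le) hbdd

theorem exists_norm_le_infDist_dyadicSlice_add {K : ℕ → Set E} (hne : ∀ n, (K n).Nonempty)
    {ε : ℕ → ℝ} (hε : ∀ n, 0 < ε n) :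
    ∃ c : ℕ → E, ∀ n, c n ∈ K n ∧
      ‖dyadicSum c n + (1 / 2 : ℝ) ^ n • c n‖ ≤ infDist 0 (dyadicSlice (K n) c n) + ε n := by
  have hstep (n : ℕ) (S : E) : ∃ g ∈ K n,
      ‖S + (1 / 2 : ℝ) ^ n • g‖ ≤ infDist 0 (S +ᵥ (1 / 2 : ℝ) ^ n • K n) + ε n := by
    have hne' : (S +ᵥ (1 / 2 : ℝ) ^ n • K n).Nonempty := (hne n).smul_set.vadd_set
    obtain ⟨_, ⟨_, ⟨g, hg, rfl⟩, rfl⟩, hlt⟩ :=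
      (infDist_lt_iff (x := 0) hne').1 (lt_add_of_pos_right _ (hε n))
    exact ⟨g, hg, by simpa using hlt.le⟩
  choose g hgK hg using hstep
  let S (n : ℕ) : E := Nat.rec 0 (fun n s => s + (1 / 2 : ℝ) ^ (n + 1) • g n s) n
  have hS (n : ℕ) : dyadicSum (fun n => g n (S n)) n = S n := by
    induction n with
    | zero => rfl
    | succ n ih => rw [dyadicSum_succ, ih]
  refine ⟨fun n => g n (S n), fun n => ⟨hgK n _, ?_⟩⟩
  rw [dyadicSlice, hS]
  exact hg n _

theorem norm_dyadicSum_le {c : ℕ → E} {θ ρ : ℝ} (hθ : θ ≤ ρ)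
    (hT : ∀ n, ‖dyadicSum c n + (1 / 2 : ℝ) ^ n • c n‖ ≤ ρ + θ / 4 * (1 / 4) ^ n) (n : ℕ) :
    ‖dyadicSum c n‖ ≤ ρ - θ / 2 * (1 / 2) ^ n - θ / 2 * (1 / 4) ^ n := by
  induction n with
  | zero => simpa [dyadicSum] using by linarith
  | succ n ih =>
    have hmid : dyadicSum c (n + 1) = (1 / 2 : ℝ) • dyadicSum c n +
        (1 / 2 : ℝ) • (dyadicSum c n + (1 / 2 : ℝ) ^ n • c n) := by
      rw [dyadicSum_succ, pow_succ]
      module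
    have hnorm : ‖dyadicSum c (n + 1)‖ ≤
        1 / 2 * ‖dyadicSum c n‖ + 1 / 2 * ‖dyadicSum c n + (1 / 2 : ℝ) ^ n • c n‖ := by
      rw [hmid]
      refine (norm_add_le _ _).trans_eq ?_
      rw [norm_smul, norm_smul, Real.norm_of_nonneg (by norm_num)]
    rw [pow_succ, pow_succ]
    linarith [hT n]

theorem exists_dual_forall_apply_lt_norm {K : ℕ → Set (StrongDual ℝ E)} (hanti : Antitone K)
    (hconv : ∀ n, Convex ℝ (K n)) (hne : ∀ n, (K n).Nonempty) (hbdd : IsBounded (K 0)) {θ : ℝ}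
    (hθ : 0 < θ) (hlow : ∀ g ∈ K 0, θ ≤ ‖g‖)
    (hzero : ∀ z, ∀ ε > 0, ∃ n, ∀ g ∈ K n, g z ≤ ε) :
    ∃ h : StrongDual ℝ E, ∀ z, ‖z‖ ≤ 1 → h z < ‖h‖ := by
  obtain ⟨c, hc⟩ := exists_norm_le_infDist_dyadicSlice_add hne
    (ε := fun n => θ / 4 * (1 / 4) ^ n) fun n => by positivity
  obtain ⟨h, hh⟩ := nonempty_iInter_closure_dyadicSlice hanti hconv hbdd fun n => (hc n).1
  rw [mem_iInter] at hh
  have hT (n : ℕ) : ‖dyadicSum c n + (1 / 2 : ℝ) ^ n • c n‖ ≤ ‖h‖ + θ / 4 * (1 / 4) ^ n := by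
    refine (hc n).2.trans (add_le_add_left ?_ _)
    rw [← infDist_closure, ← dist_zero_left]
    exact infDist_le_dist_of_mem (hh n)
  have hθh : θ ≤ ‖h‖ := by
    refine closure_minimal hlow (isClosed_le continuous_const continuous_norm) ?_
    simpa only [dyadicSlice_zero] using hh 0
  refine ⟨h, fun z hz => ?_⟩
  obtain ⟨n, hn⟩ := hzero z (θ / 2) (half_pos hθ)
  have htail : h z ≤ dyadicSum c n z + (1 / 2) ^ n * (θ / 2) := by
    refine closure_minimal (fun g hg => ?_) (isClosed_le (by fun_prop) continuous_const) (hh n)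
      (t := {g : StrongDual ℝ E | g z ≤ dyadicSum c n z + (1 / 2) ^ n * (θ / 2)})
    obtain ⟨k, hk, rfl⟩ := mem_dyadicSlice.1 hg
    simp only [mem_ofPred_eq, add_apply, smul_apply, smul_eq_mul]
    gcongr
    exact hn k hk
  calc h z ≤ ‖dyadicSum c n‖ + (1 / 2) ^ n * (θ / 2) :=
        htail.trans (by gcongr; exact (le_abs_self _).trans ((dyadicSum c n).unit_le_opNorm z hz))
    _ ≤ ‖h‖ - θ / 2 * (1 / 4) ^ n := by linarith [norm_dyadicSum_le hθh hT n]
    _ < ‖h‖ := sub_lt_self _ (by positivity)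

theorem exists_dual_forall_apply_lt_norm_of_tendsto {f : ℕ → StrongDual ℝ E}
    (hbdd : IsBounded (range f)) {θ : ℝ} (hθ : 0 < θ)
    (hlow : ∀ g ∈ convexHull ℝ (range f), θ ≤ ‖g‖) (hf : ∀ z, Tendsto (f · z) atTop (𝓝 0)) :
    ∃ h : StrongDual ℝ E, ∀ z, ‖z‖ ≤ 1 → h z < ‖h‖ := by
  have hrange (n : ℕ) : convexHull ℝ (f '' Ici n) ⊆ convexHull ℝ (range f) :=
    convexHull_mono (image_subset_range f _)
  refine exists_dual_forall_apply_lt_norm (K := fun n => convexHull ℝ (f '' Ici n))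
    (fun m n hmn => convexHull_mono (image_mono (Ici_subset_Ici.2 hmn)))
    (fun n => convex_convexHull ℝ _)
    (fun n => ⟨f n, subset_convexHull ℝ _ (mem_image_of_mem f self_mem_Ici)⟩)
    ((isBounded_convexHull.2 hbdd).subset (hrange 0)) hθ (fun g hg => hlow g (hrange 0 hg))
    fun z ε hε => ?_
  obtain ⟨N, hN⟩ := eventually_atTop.1 ((hf z).eventually_le_const hε)
  have hsub : convexHull ℝ (f '' Ici N) ⊆ {g | g z ≤ ε} := by
    refine convexHull_min ?_ ((convex_Iic ε).linear_preimage
      (ContinuousLinearMap.apply ℝ ℝ z).toLinearMap)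
    rintro _ ⟨n, hn, rfl⟩
    exact hN n hn
  exact ⟨N, fun g hg => hsub hg⟩

theorem exists_isClosed_submodule_dual_forall_apply_lt_norm [CompleteSpace E]
    (hE : ¬Function.Surjective (inclusionInDoubleDual ℝ E)) :
    ∃ Z : Submodule ℝ E, IsClosed (Z : Set E) ∧
      ∃ h : StrongDual ℝ Z, ∀ z, ‖z‖ ≤ 1 → h z < ‖h‖ := by
  obtain ⟨δ, hδ, f, x, hfx⟩ := exists_isJamesSystem_of_not_surjective hE
  let Z := (Submodule.span ℝ (range x)).topologicalClosure
  have hxZ (n : ℕ) : x n ∈ Z :=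
    Submodule.le_topologicalClosure _ (Submodule.subset_span (mem_range_self n))
  have hrestrict := hfx.restrict hxZ
  refine ⟨Z, Submodule.isClosed_topologicalClosure _,
    exists_dual_forall_apply_lt_norm_of_tendsto ?_ hδ
      (fun g => hrestrict.le_norm_of_mem_convexHull) fun z => hfx.tendsto_apply_zero z.2⟩
  exact isBounded_iff_forall_norm_le.2 ⟨1, forall_mem_range.2 hrestrict.norm_dual_le_one⟩

theorem exists_norm_le_apply_of_isMinOn_norm {h : StrongDual ℝ E} {z : E} (hz : h z = 1)
    (hmin : IsMinOn norm {w | h w = 1} z) : ∃ u, ‖u‖ ≤ 1 ∧ ‖h‖ ≤ h u := by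
  have hz0 : 0 < ‖z‖ := norm_pos_iff.2 (by rintro rfl; simp at hz)
  refine ⟨‖z‖⁻¹ • z, by rw [norm_smul, norm_inv, norm_norm, inv_mul_cancel₀ hz0.ne'], ?_⟩
  rw [map_smul, hz, smul_eq_mul, mul_one]
  refine h.opNorm_le_bound (by positivity) fun w => ?_
  obtain h0 | h0 := eq_or_ne (h w) 0
  · rw [h0, norm_zero]
    positivity
  · have hle : ‖z‖ ≤ ‖(h w)⁻¹ • w‖ := hmin (by simp [h0])
    rw [norm_smul, norm_inv, ← div_eq_inv_mul, le_div_iff₀ (norm_pos_iff.2 h0)] at hle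
    rwa [← div_eq_inv_mul, le_div_iff₀ hz0, mul_comm]

theorem mem_genProj_zero_iff {C : Set E} {u : E} : u ∈ genProj C 0 ↔ u ∈ C ∧ IsMinOn norm C u := by
  simp [genProj, lyapV, isMinOn_iff, sq_le_sq₀]

theorem surjective_inclusionInDoubleDual_of_genProj_zero_nonempty [CompleteSpace E]
    (hproj : ∀ C : Set E, C.Nonempty → IsClosed C → Convex ℝ C → (genProj C 0).Nonempty) :
    Function.Surjective (inclusionInDoubleDual ℝ E) := by
  by_contra hE
  obtain ⟨Z, hZ, h, hlt⟩ := exists_isClosed_submodule_dual_forall_apply_lt_norm hE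
  obtain ⟨v, hv⟩ : ∃ v, h v ≠ 0 := by
    by_contra! h0
    have hpos : 0 < ‖h‖ := by simpa using hlt 0
    exact hpos.not_ge (h.opNorm_le_bound le_rfl fun v => by simp [h0 v])
  obtain ⟨u, hu⟩ := hproj (Z.subtypeL '' {z | h z = 1})
    ⟨_, (h v)⁻¹ • v, by simp [hv], rfl⟩
    (hZ.isClosedEmbedding_subtypeVal.isClosedMap _ (isClosed_eq h.continuous continuous_const))
    (((convex_singleton (1 : ℝ)).linear_preimage h.toLinearMap).linear_image Z.subtypeL.toLinearMap)
  obtain ⟨⟨z, hz, rfl⟩, hmin⟩ := mem_genProj_zero_iff.1 hu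
  obtain ⟨w, hw, hle⟩ :=
    exists_norm_le_apply_of_isMinOn_norm hz fun w hw => hmin (mem_image_of_mem _ hw)
  exact (hlt w hw).not_ge hle

end Reflexivity

/-- A Banach space is reflexive iff the canonical embedding into the double dual is onto. -/
theorem statement_4 {B : Type*} [NormedAddCommGroup B] [NormedSpace ℝ B] [CompleteSpace B] :
    Function.Surjective ⇑(NormedSpace.inclusionInDoubleDual ℝ B) ↔
      ∀ C : Set B, C.Nonempty → IsClosed C → Convex ℝ C →
        ∀ φ : B →L[ℝ] ℝ, (genProj C φ).Nonempty :=
  ⟨fun hB _ hne hclosed hconv =>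
    genProj_nonempty_of_surjective_inclusionInDoubleDual hB hne hclosed hconv,
   fun hproj => surjective_inclusionInDoubleDual_of_genProj_zero_nonempty
    fun C hne hclosed hconv => hproj C hne hclosed hconv 0⟩
end
end

section
/- Let B be a real Banach space with dual B* and let C be a nonempty, closed, and convex subset of B. Let x ∈ B and suppose there exists jx ∈ J(x) with π_C(jx) ≠ ∅. Then Π_C(x) is a union of nonempty, closed, convex, and bounded subsets of C, and Π_C(x) itself is a bounded set. -/
open Set Filter

noncomputable section

/-!
For fixed `φ` the functional `V(φ, ·)` is continuous and convex, so its minimizers over a closed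
convex set form a closed convex set. The bounds `(‖φ‖ - ‖u‖)² ≤ V(φ, u) ≤ (‖φ‖ + ‖u‖)²`, the lower
one at a minimizer `u` and the upper one at a competitor `y`, give `‖u‖ ≤ 2‖φ‖ + ‖y‖`. This is
uniform over `φ ∈ J(x)`, where `‖φ‖ = ‖x‖`.
-/

section Minimizers

variable {α β : Type*} {s : Set α} {f : α → β}

theorem setOfPred_isMinOn_eq_inter_biInter [Preorder β] :
    {u ∈ s | IsMinOn f s u} = s ∩ ⋂ y ∈ s, {u ∈ s | f u ≤ f y} := by
  ext u
  simp +contextual [isMinOn_iff]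

theorem isClosed_setOfPred_isMinOn [TopologicalSpace α] [LinearOrder β] (hs : IsClosed s)
    (hf : LowerSemicontinuousOn f s) : IsClosed {u ∈ s | IsMinOn f s u} := by
  have hsub (b : β) : IsClosed (s ∩ f ⁻¹' Iic b) := by
    obtain ⟨v, hv, hsv⟩ := lowerSemicontinuousOn_iff_preimage_Iic.1 hf b
    exact hsv ▸ hs.inter hv
  rw [setOfPred_isMinOn_eq_inter_biInter]
  exact hs.inter <| isClosed_biInter fun y _ => hsub (f y)

theorem convex_setOfPred_isMinOn {𝕜 : Type*} [Semiring 𝕜] [PartialOrder 𝕜] [AddCommMonoid α]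
    [SMul 𝕜 α] [Preorder β] [IsDirectedOrder β] (hf : QuasiconvexOn 𝕜 s f) :
    Convex 𝕜 {u ∈ s | IsMinOn f s u} := by
  rw [setOfPred_isMinOn_eq_inter_biInter]
  exact hf.convex.inter <| convex_iInter₂ fun y _ => hf (f y)

end Minimizers

section LyapunovFunctional

variable {B : Type*} [NormedAddCommGroup B] [NormedSpace ℝ B]

theorem continuous_lyapV_s8 (φ : B →L[ℝ] ℝ) : Continuous (lyapV φ) := by
  unfold lyapV
  fun_prop

theorem convexOn_lyapV_s8 {s : Set B} (hs : Convex ℝ s) (φ : B →L[ℝ] ℝ) :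
    ConvexOn ℝ s (lyapV φ) := by
  have hsq : ConvexOn ℝ s fun u => ‖u‖ ^ 2 := (convexOn_norm hs).pow (fun _ _ => norm_nonneg _) 2
  have hlin : ConvexOn ℝ s fun u => ((-2 : ℝ) • φ) u := ((-2 : ℝ) • φ).toLinearMap.convexOn hs
  refine ((hlin.add hsq).add_const (‖φ‖ ^ 2)).congr fun u _ => ?_
  simp only [Pi.add_apply, smul_apply, smul_eq_mul, lyapV]
  ring

theorem sq_norm_sub_norm_le_lyapV_s8 (φ : B →L[ℝ] ℝ) (u : B) : (‖φ‖ - ‖u‖) ^ 2 ≤ lyapV φ u := by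
  have hφ : φ u ≤ ‖φ‖ * ‖u‖ := (le_abs_self _).trans (φ.le_opNorm u)
  unfold lyapV
  linarith

theorem lyapV_le_sq_norm_add_norm (φ : B →L[ℝ] ℝ) (u : B) : lyapV φ u ≤ (‖φ‖ + ‖u‖) ^ 2 := by
  have hφ : -φ u ≤ ‖φ‖ * ‖u‖ := (neg_le_abs _).trans (φ.le_opNorm u)
  unfold lyapV
  linarith

end LyapunovFunctional

section GeneralizedProjection

variable {B : Type*} [NormedAddCommGroup B] [NormedSpace ℝ B] {C : Set B}

theorem genProj_eq_setOfPred_isMinOn (C : Set B) (φ : B →L[ℝ] ℝ) :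
    genProj C φ = {u ∈ C | IsMinOn (lyapV φ) C u} := by
  simp only [genProj, isMinOn_iff]

theorem genProj_subset (C : Set B) (φ : B →L[ℝ] ℝ) : genProj C φ ⊆ C :=
  fun _ hu => hu.1

theorem isClosed_genProj (hC : IsClosed C) (φ : B →L[ℝ] ℝ) : IsClosed (genProj C φ) := by
  rw [genProj_eq_setOfPred_isMinOn]
  exact isClosed_setOfPred_isMinOn hC <|
    (continuous_lyapV_s8 φ).lowerSemicontinuous.lowerSemicontinuousOn C

theorem convex_genProj (hC : Convex ℝ C) (φ : B →L[ℝ] ℝ) : Convex ℝ (genProj C φ) := by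
  rw [genProj_eq_setOfPred_isMinOn]
  exact convex_setOfPred_isMinOn (convexOn_lyapV_s8 hC φ).quasiconvexOn

theorem norm_le_of_mem_genProj {φ : B →L[ℝ] ℝ} {u y : B} (hu : u ∈ genProj C φ) (hy : y ∈ C) :
    ‖u‖ ≤ 2 * ‖φ‖ + ‖y‖ := by
  have hsq : (‖φ‖ - ‖u‖) ^ 2 ≤ (‖φ‖ + ‖y‖) ^ 2 := calc
    (‖φ‖ - ‖u‖) ^ 2 ≤ lyapV φ u := sq_norm_sub_norm_le_lyapV_s8 φ u
    _ ≤ lyapV φ y := hu.2 y hy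
    _ ≤ (‖φ‖ + ‖y‖) ^ 2 := lyapV_le_sq_norm_add_norm φ y
  linarith [(abs_le_of_sq_le_sq' hsq (by positivity)).1]

theorem isBounded_biUnion_genProj (C : Set B) {Φ : Set (B →L[ℝ] ℝ)}
    (hΦ : Bornology.IsBounded Φ) : Bornology.IsBounded (⋃ φ ∈ Φ, genProj C φ) := by
  obtain ⟨r, hr⟩ := hΦ.exists_norm_le
  obtain rfl | ⟨y, hy⟩ := C.eq_empty_or_nonempty
  · simp [genProj]
  refine isBounded_iff_forall_norm_le.2 ⟨2 * r + ‖y‖, fun u hu => ?_⟩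
  obtain ⟨φ, hφ, huφ⟩ := mem_iUnion₂.1 hu
  linarith [norm_le_of_mem_genProj huφ hy, hr φ hφ]

end GeneralizedProjection

section GeneralizedMetricProjection

variable {B : Type*} [NormedAddCommGroup B] [NormedSpace ℝ B]

theorem isBounded_dualityMap (x : B) : Bornology.IsBounded (dualityMap x) :=
  isBounded_iff_forall_norm_le.2 ⟨‖x‖, fun _ hφ => hφ.2.le⟩

theorem isBounded_genMetricProj (C : Set B) (x : B) : Bornology.IsBounded (genMetricProj C x) :=
  isBounded_biUnion_genProj C (isBounded_dualityMap x)

theorem genProj_subset_genMetricProj (C : Set B) {x : B} {φ : B →L[ℝ] ℝ}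
    (hφ : φ ∈ dualityMap x) : genProj C φ ⊆ genMetricProj C x :=
  subset_biUnion_of_mem (u := genProj C) hφ

theorem genMetricProj_eq_sUnion (C : Set B) (x : B) :
    genMetricProj C x = ⋃₀ (genProj C '' dualityMap x \ {∅}) := by
  rw [sUnion_sdiff_singleton_empty, sUnion_image, genMetricProj]

end GeneralizedMetricProjection

theorem statement_8_general {B : Type*} [NormedAddCommGroup B] [NormedSpace ℝ B]
    {C : Set B} (hclosed : IsClosed C) (hconv : Convex ℝ C)
    {x : B} (h : ∃ jx ∈ dualityMap x, (genProj C jx).Nonempty) :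
    (∃ 𝒮 : Set (Set B), genMetricProj C x = ⋃₀ 𝒮 ∧ 𝒮.Nonempty ∧
        ∀ s ∈ 𝒮, s.Nonempty ∧ IsClosed s ∧ Convex ℝ s ∧
          Bornology.IsBounded s ∧ s ⊆ C) ∧
      Bornology.IsBounded (genMetricProj C x) := by
  have hbdd := isBounded_genMetricProj C x
  obtain ⟨jx, hjx, hne⟩ := h
  refine ⟨⟨_, genMetricProj_eq_sUnion C x,
    ⟨_, mem_image_of_mem _ hjx, hne.ne_empty⟩, ?_⟩, hbdd⟩
  rintro _ ⟨⟨φ, hφ, rfl⟩, hφne⟩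
  exact ⟨nonempty_iff_ne_empty.2 hφne, isClosed_genProj hclosed φ, convex_genProj hconv φ,
    hbdd.subset (genProj_subset_genMetricProj C hφ), genProj_subset C φ⟩

theorem statement_8 {B : Type*} [NormedAddCommGroup B] [NormedSpace ℝ B] [CompleteSpace B]
    (C : Set B) (hC : C.Nonempty) (hclosed : IsClosed C) (hconv : Convex ℝ C)
    (x : B) (h : ∃ jx ∈ dualityMap x, (genProj C jx).Nonempty) :
    (∃ 𝒮 : Set (Set B), genMetricProj C x = ⋃₀ 𝒮 ∧ 𝒮.Nonempty ∧
        ∀ s ∈ 𝒮, s.Nonempty ∧ IsClosed s ∧ Convex ℝ s ∧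
          Bornology.IsBounded s ∧ s ⊆ C) ∧
      Bornology.IsBounded (genMetricProj C x) :=
  statement_8_general hclosed hconv h
end
end

section
/- Let B be a real Banach space and let C be a nonempty subset of B. Then Π_C is monotone (d-accretive): for any x, y ∈ B, any jx ∈ J(x) and jy ∈ J(y), and any u ∈ π_C(jx) and v ∈ π_C(jy), one has ⟨jx − jy, u − v⟩ ≥ 0. -/
open Set Filter

noncomputable section

/-! Up to the factor `2` and the constant `‖φ‖ ^ 2`, minimizing the Lyapunov functional `V(φ, ·)`
is minimizing `f - φ` with `f = ‖·‖ ^ 2 / 2` independent of `φ`. If `u` minimizes `f - φ` and `v`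
minimizes `f - ψ` over the same set, comparing each minimizer with the other gives
`ψ (u - v) ≤ f u - f v ≤ φ (u - v)`. -/

theorem map_sub_le_map_sub_of_isMinOn {E G F : Type*} [AddGroup E] [AddCommGroup G] [Preorder G]
    [AddLeftMono G] [FunLike F E G] [AddMonoidHomClass F E G] {C : Set E} {f : E → G}
    {φ ψ : F} {u v : E} (hu : u ∈ C) (hv : v ∈ C)
    (hφ : IsMinOn (fun y ↦ f y - φ y) C u) (hψ : IsMinOn (fun y ↦ f y - ψ y) C v) :
    ψ (u - v) ≤ φ (u - v) := by
  have hψuv : ψ u - ψ v ≤ f u - f v := by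
    have hvu : f v - ψ v ≤ f u - ψ u := hψ hu
    rwa [sub_le_sub_iff, add_comm, ← sub_le_sub_iff] at hvu
  have hφuv : f u - f v ≤ φ u - φ v := by
    have huv : f u - φ u ≤ f v - φ v := hφ hv
    rwa [sub_le_sub_iff, add_comm (f v), ← sub_le_sub_iff] at huv
  simpa only [map_sub] using hψuv.trans hφuv

section NormedSpace

variable {B : Type*} [NormedAddCommGroup B] [NormedSpace ℝ B]

theorem lyapV_le_lyapV_iff {φ : B →L[ℝ] ℝ} {u y : B} :
    lyapV φ u ≤ lyapV φ y ↔ ‖u‖ ^ 2 / 2 - φ u ≤ ‖y‖ ^ 2 / 2 - φ y := by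
  unfold lyapV
  constructor <;> intro h <;> linarith

theorem mem_genProj_iff_isMinOn {C : Set B} {φ : B →L[ℝ] ℝ} {u : B} :
    u ∈ genProj C φ ↔ u ∈ C ∧ IsMinOn (fun y ↦ ‖y‖ ^ 2 / 2 - φ y) C u := by
  simp only [genProj, mem_ofPred_eq, isMinOn_iff, lyapV_le_lyapV_iff]

theorem statement_10_general {C : Set B} {φ ψ : B →L[ℝ] ℝ} {u v : B}
    (hu : u ∈ genProj C φ) (hv : v ∈ genProj C ψ) :
    0 ≤ (φ - ψ) (u - v) := by
  obtain ⟨huC, hu_min⟩ := mem_genProj_iff_isMinOn.mp hu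
  obtain ⟨hvC, hv_min⟩ := mem_genProj_iff_isMinOn.mp hv
  exact sub_nonneg.mpr (map_sub_le_map_sub_of_isMinOn huC hvC hu_min hv_min)

end NormedSpace

theorem statement_10 {B : Type*} [NormedAddCommGroup B] [NormedSpace ℝ B] [CompleteSpace B]
    (C : Set B) (hC : C.Nonempty) (x y : B) (jx jy : B →L[ℝ] ℝ)
    (hjx : jx ∈ dualityMap x) (hjy : jy ∈ dualityMap y)
    (u v : B) (hu : u ∈ genProj C jx) (hv : v ∈ genProj C jy) :
    0 ≤ (jx - jy) (u - v) :=
  statement_10_general hu hv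
end
end

section
/- Let B be a real Banach space and let C be a nonempty subset of B. Then: (a) Π_C(x) ⊇ 𝓙(x) ∩ C for every x ∈ B; and (b) for every x ∈ C, Π_C(x) = 𝓙(x) ∩ C and x ∈ Π_C(x). -/
open Set Filter

noncomputable section

/-!
The functional splits as `V(φ, x) = (‖φ‖ - ‖x‖)² + 2 (‖φ‖ ‖x‖ - ⟨φ, x⟩)`, a sum of two nonnegative
terms, so `V ≥ 0`, with equality exactly when `φ ∈ J x`. Hence a point `y ∈ C` with `φ ∈ J y`
minimizes `V(φ, ·)` over `C`; and if `φ ∈ J x` for some `x ∈ C`, the minimum is `0`, so every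
minimizer `y` satisfies `φ ∈ J y`.
-/

section

variable {B : Type*} [NormedAddCommGroup B] [NormedSpace ℝ B] {C : Set B} {φ : B →L[ℝ] ℝ} {x y : B}

theorem lyapV_eq_sq_add (φ : B →L[ℝ] ℝ) (x : B) :
    lyapV φ x = (‖φ‖ - ‖x‖) ^ 2 + 2 * (‖φ‖ * ‖x‖ - φ x) := by
  rw [lyapV]
  ring

theorem apply_le_norm_mul_norm (φ : B →L[ℝ] ℝ) (x : B) : φ x ≤ ‖φ‖ * ‖x‖ :=
  (Real.le_norm_self _).trans (φ.le_opNorm x)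

theorem lyapV_nonneg (φ : B →L[ℝ] ℝ) (x : B) : 0 ≤ lyapV φ x := by
  have hpair : 0 ≤ ‖φ‖ * ‖x‖ - φ x := sub_nonneg.mpr (apply_le_norm_mul_norm φ x)
  rw [lyapV_eq_sq_add]
  positivity

theorem lyapV_eq_zero_iff : lyapV φ x = 0 ↔ φ ∈ dualityMap x := by
  have hpair : 0 ≤ 2 * (‖φ‖ * ‖x‖ - φ x) :=
    mul_nonneg zero_le_two (sub_nonneg.mpr (apply_le_norm_mul_norm φ x))
  calc lyapV φ x = 0
    _ ↔ (‖φ‖ - ‖x‖) ^ 2 = 0 ∧ 2 * (‖φ‖ * ‖x‖ - φ x) = 0 := by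
      rw [lyapV_eq_sq_add, add_eq_zero_iff_of_nonneg (sq_nonneg _) hpair]
    _ ↔ ‖φ‖ = ‖x‖ ∧ φ x = ‖φ‖ * ‖x‖ := by
      rw [sq_eq_zero_iff, sub_eq_zero, mul_eq_zero_iff_left two_ne_zero, sub_eq_zero,
        eq_comm (a := φ x)]
    _ ↔ ‖φ‖ = ‖x‖ ∧ φ x = ‖x‖ ^ 2 := and_congr_right fun hnorm => by rw [hnorm, sq]
    _ ↔ φ ∈ dualityMap x := and_comm

theorem dualityMap_nonempty (x : B) : (dualityMap x).Nonempty := by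
  rcases eq_or_ne x 0 with rfl | hx
  · exact ⟨0, by simp [dualityMap]⟩
  · obtain ⟨g, hg_norm, hgx⟩ := exists_dual_vector ℝ x (norm_ne_zero_iff.mpr hx)
    exact ⟨‖x‖ • g, by simp [hgx, sq], by simp [norm_smul, hg_norm]⟩

theorem self_mem_genIdentical (x : B) : x ∈ genIdentical x :=
  let ⟨φ, hφ⟩ := dualityMap_nonempty x
  ⟨φ, hφ, hφ⟩

theorem mem_genProj_of_mem_dualityMap (hy : y ∈ C) (hφ : φ ∈ dualityMap y) : y ∈ genProj C φ :=
  ⟨hy, fun z _ => (lyapV_eq_zero_iff.mpr hφ).trans_le (lyapV_nonneg φ z)⟩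

theorem mem_dualityMap_of_mem_genProj (hx : x ∈ C) (hφ : φ ∈ dualityMap x)
    (hy : y ∈ genProj C φ) : φ ∈ dualityMap y := by
  have hle : lyapV φ y ≤ 0 := (hy.2 x hx).trans_eq (lyapV_eq_zero_iff.mpr hφ)
  exact lyapV_eq_zero_iff.mp (hle.antisymm (lyapV_nonneg φ y))

theorem genIdentical_inter_subset_genMetricProj (C : Set B) (x : B) :
    genIdentical x ∩ C ⊆ genMetricProj C x := by
  rintro y ⟨⟨φ, hφx, hφy⟩, hy⟩
  exact mem_biUnion hφx (mem_genProj_of_mem_dualityMap hy hφy)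

theorem genMetricProj_subset_genIdentical_inter (hx : x ∈ C) :
    genMetricProj C x ⊆ genIdentical x ∩ C := by
  intro y hy
  obtain ⟨φ, hφx, hyφ⟩ := mem_iUnion₂.mp hy
  exact ⟨⟨φ, hφx, mem_dualityMap_of_mem_genProj hx hφx hyφ⟩, hyφ.1⟩

end

theorem statement_14_general {B : Type*} [NormedAddCommGroup B] [NormedSpace ℝ B] (C : Set B) :
    (∀ x : B, genIdentical x ∩ C ⊆ genMetricProj C x) ∧
      (∀ x ∈ C, genMetricProj C x = genIdentical x ∩ C ∧ x ∈ genMetricProj C x) := by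
  have hsub := genIdentical_inter_subset_genMetricProj C
  refine ⟨hsub, fun x hx => ⟨?_, hsub x ⟨self_mem_genIdentical x, hx⟩⟩⟩
  exact (genMetricProj_subset_genIdentical_inter hx).antisymm (hsub x)

theorem statement_14 {B : Type*} [NormedAddCommGroup B] [NormedSpace ℝ B] [CompleteSpace B]
    (C : Set B) (hC : C.Nonempty) :
    (∀ x : B, genIdentical x ∩ C ⊆ genMetricProj C x) ∧
      (∀ x ∈ C, genMetricProj C x = genIdentical x ∩ C ∧ x ∈ genMetricProj C x) :=
  statement_14_general C
end
end
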